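/- Let p be an odd prime, let q ≥ 1 be an integer, let M ≥ 1 be an integer, and set θ = p^{−M} ∈ ℚ_p, so ‖θ‖_p > 1. Let f(x) = ((θx + q)/(x + θ + q − 1))². Then for every x ∈ ℚ_p: (i) if ‖x‖_p > ‖θ‖_p then ‖f(x)‖_p = ‖θ‖_p²; (ii) if ‖q‖_p/‖θ‖_p < ‖x‖_p < ‖θ‖_p then ‖f(x)‖_p = ‖x‖_p²; (iii) if ‖x‖_p ≤ ‖q‖_p/‖θ‖_p then ‖f(x)‖_p ≤ (‖q‖_p/‖θ‖_p)². -/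

import Mathlib

/-!
When `‖x‖ ≠ ‖θ‖` the ultrametric inequality makes the larger of `x` and `θ` dominate the
denominator `x + θ + q - 1`, since `q - 1` has norm below `‖θ‖`. In the numerator `θ * x + q` the
dominant term is `θ * x` or `q` according to whether `‖x‖` exceeds `‖q‖ / ‖θ‖`, a threshold
below `‖θ‖`; the three regimes are the possible combinations.
-/

section UltrametricPotts

variable {K : Type*} [NormedDivisionRing K]

/-- The dynamical system of the `(q + 1)`-state Potts model on the Cayley tree of order `k`, with
parameter `θ`. The number of states enters only through `q : K`, which need not be an integer. At
the pole `x = 1 - θ - q` the fraction is `0`. -/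
def pottsMap (θ q : K) (k : ℕ) (x : K) : K :=
  ((θ * x + q) / (x + θ + q - 1)) ^ k

theorem norm_pottsMap (θ q : K) (k : ℕ) (x : K) :
    ‖pottsMap θ q k x‖ = (‖θ * x + q‖ / ‖x + θ + q - 1‖) ^ k := by
  rw [pottsMap, norm_pow, norm_div]

variable [IsUltrametricDist K] {θ q x : K}

theorem norm_mul_add_eq_of_div_lt_norm (hθ : θ ≠ 0) (hx : ‖q‖ / ‖θ‖ < ‖x‖) :
    ‖θ * x + q‖ = ‖θ‖ * ‖x‖ := by
  have hq : ‖q‖ < ‖θ * x‖ := by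
    rwa [norm_mul, ← div_lt_iff₀' (norm_pos_iff.mpr hθ)]
  rw [IsUltrametricDist.norm_add_eq_max_of_norm_ne_norm hq.ne', max_eq_left hq.le, norm_mul]

theorem norm_mul_add_le_of_norm_le_div (hx : ‖x‖ ≤ ‖q‖ / ‖θ‖) : ‖θ * x + q‖ ≤ ‖q‖ := by
  have hθx : ‖θ * x‖ ≤ ‖q‖ := by
    rw [norm_mul, mul_comm]
    exact mul_le_of_le_div₀ (norm_nonneg q) (norm_nonneg θ) hx
  exact (IsUltrametricDist.norm_add_le_max _ _).trans (max_le hθx le_rfl)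

theorem norm_add_add_sub_one_eq_max (hθ : 1 < ‖θ‖) (hq : ‖q‖ < ‖θ‖) (hx : ‖x‖ ≠ ‖θ‖) :
    ‖x + θ + q - 1‖ = max ‖x‖ ‖θ‖ := by
  have hq_sub_one : ‖q - 1‖ < ‖θ‖ := by
    rw [sub_eq_add_neg]
    exact (IsUltrametricDist.norm_add_le_max q (-1)).trans_lt
      (max_lt hq (by rwa [norm_neg, norm_one]))
  have hxθ : ‖x + θ‖ = max ‖x‖ ‖θ‖ := IsUltrametricDist.norm_add_eq_max_of_norm_ne_norm hx
  have hlt : ‖q - 1‖ < ‖x + θ‖ := hxθ ▸ lt_max_of_lt_right hq_sub_one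
  rw [add_sub_assoc, IsUltrametricDist.norm_add_eq_max_of_norm_ne_norm hlt.ne',
    max_eq_left hlt.le, hxθ]

theorem norm_pottsMap_of_norm_lt (hθ : 1 < ‖θ‖) (hq : ‖q‖ < ‖θ‖) (hx : ‖θ‖ < ‖x‖) (k : ℕ) :
    ‖pottsMap θ q k x‖ = ‖θ‖ ^ k := by
  have hθ_pos : 0 < ‖θ‖ := one_pos.trans hθ
  have hqx : ‖q‖ / ‖θ‖ < ‖x‖ := (div_le_self (norm_nonneg q) hθ.le).trans_lt (hq.trans hx)
  rw [norm_pottsMap, norm_mul_add_eq_of_div_lt_norm (norm_pos_iff.mp hθ_pos) hqx,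
    norm_add_add_sub_one_eq_max hθ hq hx.ne', max_eq_left hx.le,
    mul_div_cancel_right₀ _ (hθ_pos.trans hx).ne']

theorem norm_pottsMap_of_div_lt_norm_of_norm_lt (hθ : 1 < ‖θ‖) (hq : ‖q‖ < ‖θ‖)
    (hqx : ‖q‖ / ‖θ‖ < ‖x‖) (hx : ‖x‖ < ‖θ‖) (k : ℕ) :
    ‖pottsMap θ q k x‖ = ‖x‖ ^ k := by
  have hθ_pos : 0 < ‖θ‖ := one_pos.trans hθ
  rw [norm_pottsMap, norm_mul_add_eq_of_div_lt_norm (norm_pos_iff.mp hθ_pos) hqx,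
    norm_add_add_sub_one_eq_max hθ hq hx.ne, max_eq_right hx.le,
    mul_div_cancel_left₀ _ hθ_pos.ne']

theorem norm_pottsMap_le_of_norm_le_div (hθ : 1 < ‖θ‖) (hq : ‖q‖ < ‖θ‖)
    (hx : ‖x‖ ≤ ‖q‖ / ‖θ‖) (k : ℕ) :
    ‖pottsMap θ q k x‖ ≤ (‖q‖ / ‖θ‖) ^ k := by
  have hxθ : ‖x‖ < ‖θ‖ := (hx.trans (div_le_self (norm_nonneg q) hθ.le)).trans_lt hq
  rw [norm_pottsMap, norm_add_add_sub_one_eq_max hθ hq hxθ.ne, max_eq_right hxθ.le]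
  gcongr
  exact norm_mul_add_le_of_norm_le_div hx

theorem stmt_15_general (hθ : 1 < ‖θ‖) (hq : ‖q‖ < ‖θ‖) (k : ℕ) (x : K) :
    (‖θ‖ < ‖x‖ → ‖pottsMap θ q k x‖ = ‖θ‖ ^ k) ∧
    (‖q‖ / ‖θ‖ < ‖x‖ → ‖x‖ < ‖θ‖ → ‖pottsMap θ q k x‖ = ‖x‖ ^ k) ∧
    (‖x‖ ≤ ‖q‖ / ‖θ‖ → ‖pottsMap θ q k x‖ ≤ (‖q‖ / ‖θ‖) ^ k) :=
  ⟨fun hx => norm_pottsMap_of_norm_lt hθ hq hx k,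
    fun hqx hx => norm_pottsMap_of_div_lt_norm_of_norm_lt hθ hq hqx hx k,
    fun hx => norm_pottsMap_le_of_norm_le_div hθ hq hx k⟩

end UltrametricPotts

theorem one_lt_norm_inv_prime_pow (p : ℕ) [Fact p.Prime] {M : ℕ} (hM : M ≠ 0) :
    1 < ‖((p : ℚ_[p]) ^ M)⁻¹‖ := by
  rw [norm_inv, Padic.norm_p_pow, zpow_neg, inv_inv, zpow_natCast]
  exact one_lt_pow₀ (mod_cast (Fact.out : p.Prime).one_lt) hM

theorem stmt_15 (p : ℕ) [Fact p.Prime] (hp2 : p ≠ 2)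
    (q : ℕ) (hq : 1 ≤ q) (M : ℕ) (hM : 1 ≤ M)
    (θ : ℚ_[p]) (hθ : θ = ((p : ℚ_[p]) ^ M)⁻¹)
    (f : ℚ_[p] → ℚ_[p])
    (hf : f = fun x => ((θ * x + q) / (x + θ + q - 1)) ^ 2) :
    ∀ x : ℚ_[p],
      (‖θ‖ < ‖x‖ → ‖f x‖ = ‖θ‖ ^ 2) ∧
      (‖(q : ℚ_[p])‖ / ‖θ‖ < ‖x‖ → ‖x‖ < ‖θ‖ → ‖f x‖ = ‖x‖ ^ 2) ∧
      (‖x‖ ≤ ‖(q : ℚ_[p])‖ / ‖θ‖ → ‖f x‖ ≤ (‖(q : ℚ_[p])‖ / ‖θ‖) ^ 2) := by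
  have hθ_norm : 1 < ‖θ‖ := hθ ▸ one_lt_norm_inv_prime_pow p (Nat.one_le_iff_ne_zero.mp hM)
  exact hf ▸ stmt_15_general hθ_norm
    ((IsUltrametricDist.norm_natCast_le_one ℚ_[p] q).trans_lt hθ_norm) 2
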